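/- Let A be an n×n real matrix and C an m×n real matrix such that the pair (A, C) is completely observable. Then there exists a constant c > 0, depending only on A and C, such that for every interval I = [a, a+T] with T a positive integer, every absolutely continuous function z : I → ℝ^n and every integrable function f : I → ℝ^n satisfying ż(t) = A z(t) + f(t) for almost every t ∈ I, one has ∫_I |z(t)| dt ≤ c ( ∫_I |C z(t)| dt + ∫_I |f(t)| dt ). -/

import Mathlib

open MeasureTheory

/-- The pair `(A, C)` is completely observable: the only vector `v` with
`C A^k v = 0` for all `k = 0, …, n-1` is `v = 0`. -/
def CompletelyObservable (n m : ℕ) (A : Matrix (Fin n) (Fin n) ℝ)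
    (C : Matrix (Fin m) (Fin n) ℝ) : Prop :=
  ∀ v : Fin n → ℝ, (∀ k < n, (C * A ^ k).mulVec v = 0) → v = 0

/-!
Let `y` be the free trajectory `t ↦ exp ((t - a) • L) (z a)` issued from the initial value of `z`.
Grönwall's inequality bounds both `z` and `z - y` on a window of bounded length, the first by
`‖z a‖ + ∫ ‖f‖` and the second by `∫ ‖f‖` alone. If the output `D ∘ y` of a free trajectory vanishes
on an interval, then differentiating it repeatedly shows that the initial value is unobservable,
hence zero; by compactness of the unit sphere the `L¹` norm of the output over a window of length
`δ` therefore controls the initial value. So `‖z a‖` is controlled by `∫ ‖D z‖ + ∫ ‖f‖`, which gives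
the estimate on windows of length between `δ` and `2δ`. Both sides are additive in the interval, and
every interval of length at least `δ` splits into such windows.
-/

open Set
open NormedSpace (exp)
open scoped Topology

section Real

lemma le_mul_exp_of_le_add_mul_integral {φ : ℝ → ℝ} {M K a b : ℝ} (hK : 0 ≤ K)
    (hφ : ContinuousOn φ (Icc a b))
    (hbound : ∀ t ∈ Icc a b, φ t ≤ M + K * ∫ s in a..t, φ s) :
    ∀ t ∈ Icc a b, φ t ≤ M * Real.exp (K * (t - a)) := by
  intro t ht
  have hab : a ≤ b := ht.1.trans ht.2
  have hint : IntegrableOn φ (uIcc a b) := by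
    rw [uIcc_of_le hab]
    exact hφ.integrableOn_Icc
  have hcont : ContinuousOn (fun x => M + K * ∫ s in a..x, φ s) (Icc a b) := by
    rw [← uIcc_of_le hab]
    exact continuousOn_const.add
      (continuousOn_const.mul (intervalIntegral.continuousOn_primitive_interval hint))
  have hderiv : ∀ x ∈ Ico a b,
      HasDerivWithinAt (fun x => M + K * ∫ s in a..x, φ s) (K * φ x) (Ici x) x := by
    intro x hx
    have hx' : Icc a b ∈ 𝓝[>] x := Icc_mem_nhdsGT_of_mem hx
    refine ((intervalIntegral.integral_hasDerivWithinAt_right ?_ ?_ ?_).const_mul K).const_add M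
    · exact (hφ.mono (uIcc_subset_Icc (left_mem_Icc.2 hab)
        (Ico_subset_Icc_self hx))).intervalIntegrable
    · exact ⟨Icc a b, hx', hφ.aestronglyMeasurable measurableSet_Icc⟩
    · exact (hφ x (Ico_subset_Icc_self hx)).mono_of_mem_nhdsWithin hx'
  calc φ t ≤ M + K * ∫ s in a..t, φ s := hbound t ht
    _ ≤ gronwallBound M K 0 (t - a) :=
      le_gronwallBound_of_liminf_deriv_right_le hcont
        (fun x hx _ hr => (hderiv x hx).liminf_right_slope_le hr) (by simp)
        (fun x hx => by
          rw [add_zero]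
          exact mul_le_mul_of_nonneg_left (hbound x (Ico_subset_Icc_self hx)) hK) t ht
    _ = M * Real.exp (K * (t - a)) := gronwallBound_ε0 ..

lemma integral_le_integral_of_forall_window {u v : ℝ → ℝ} {a b δ : ℝ} (hδ : 0 < δ)
    (hu : IntegrableOn u (Icc a b)) (hv : IntegrableOn v (Icc a b)) (hlen : δ ≤ b - a)
    (hwindow : ∀ p q, a ≤ p → q ≤ b → δ ≤ q - p → q - p ≤ 2 * δ →
      ∫ t in p..q, u t ≤ ∫ t in p..q, v t) :
    ∫ t in a..b, u t ≤ ∫ t in a..b, v t := by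
  suffices h : ∀ (N : ℕ) (p : ℝ), a ≤ p → δ ≤ b - p → b - p ≤ (N + 2) * δ →
      ∫ t in p..b, u t ≤ ∫ t in p..b, v t by
    obtain ⟨N, hN⟩ := exists_nat_ge ((b - a) / δ)
    exact h N a le_rfl hlen (by rw [div_le_iff₀ hδ] at hN; linarith)
  intro N
  induction N with
  | zero => exact fun p hp hδp hp2 => hwindow p b hp le_rfl hδp (by simpa using hp2)
  | succ N ih =>
    intro p hp hδp hpN
    rcases le_total (b - p) (2 * δ) with hshort | hlong
    · exact hwindow p b hp le_rfl hδp hshort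
    have hpδ : p + δ ∈ Icc a b := ⟨by linarith, by linarith⟩
    have hsplit {w : ℝ → ℝ} (hw : IntegrableOn w (Icc a b)) :
        ∫ t in p..b, w t = (∫ t in p..p + δ, w t) + ∫ t in p + δ..b, w t :=
      (intervalIntegral.integral_add_adjacent_intervals
        (hw.mono_set (uIcc_subset_Icc ⟨hp, by linarith⟩ hpδ)).intervalIntegrable
        (hw.mono_set (uIcc_subset_Icc hpδ ⟨by linarith, le_rfl⟩)).intervalIntegrable).symm
    rw [hsplit hu, hsplit hv]
    push_cast at hpN
    exact add_le_add
      (hwindow p (p + δ) hp hpδ.2 (by linarith) (by linarith))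
      (ih (p + δ) hpδ.1 (by linarith) (by linarith))

end Real

lemma exists_pos_mul_norm_le_of_forall_pos {E : Type*} [NormedAddCommGroup E] [NormedSpace ℝ E]
    [ProperSpace E] {p : E → ℝ} (hcont : Continuous p)
    (hsmul : ∀ r > 0, ∀ v, p (r • v) = r * p v) (hpos : ∀ v ≠ 0, 0 < p v) :
    ∃ κ > 0, ∀ v, κ * ‖v‖ ≤ p v := by
  have hzero : p 0 = 0 := by
    have h := hsmul 2 two_pos 0
    rw [smul_zero] at h
    linarith
  rcases subsingleton_or_nontrivial E with _ | _
  · exact ⟨1, one_pos, fun v => by simp [Subsingleton.elim v 0, hzero]⟩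
  obtain ⟨u, hu, hmin⟩ := (isCompact_sphere (0 : E) 1).exists_isMinOn
    (NormedSpace.sphere_nonempty.2 zero_le_one) hcont.continuousOn
  refine ⟨p u, hpos u (ne_zero_of_mem_unit_sphere ⟨u, hu⟩), fun v => ?_⟩
  rcases eq_or_ne v 0 with rfl | hv
  · simp [hzero]
  have hunit : ‖v‖⁻¹ • v ∈ Metric.sphere (0 : E) 1 := by simp [norm_smul, hv]
  calc p u * ‖v‖ ≤ p (‖v‖⁻¹ • v) * ‖v‖ := by
        gcongr
        exact hmin hunit
    _ = p v := by
      rw [hsmul _ (inv_pos.2 (norm_pos_iff.2 hv)), mul_right_comm,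
        inv_mul_cancel₀ (norm_ne_zero_iff.2 hv), one_mul]

variable {E F : Type*} [NormedAddCommGroup E] [NormedSpace ℝ E]
  [NormedAddCommGroup F] [NormedSpace ℝ F]

section Flow

variable [CompleteSpace E]

lemma hasDerivAt_exp_smul_apply (L : E →L[ℝ] E) (v : E) (t : ℝ) :
    HasDerivAt (fun s : ℝ => exp (s • L) v) (L (exp (t • L) v)) t := by
  simpa using (hasDerivAt_exp_smul_const' (𝕂 := ℝ) L t).clm_apply (hasDerivAt_const t v)

lemma continuous_exp_smul (L : E →L[ℝ] E) : Continuous fun t : ℝ => exp (t • L) :=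
  continuous_iff_continuousAt.2 fun t => (hasDerivAt_exp_smul_const' (𝕂 := ℝ) L t).continuousAt

end Flow

section Observability

/-- Observability of `y' = L y` through the output `D y`: no nonzero state is annihilated by every
`D ∘ L ^ k`. All powers are allowed, so that the notion makes sense in infinite dimension; in
dimension `n` the powers `k < n` suffice, by the Cayley–Hamilton theorem. -/
def IsObservablePair (L : E →L[ℝ] E) (D : E →L[ℝ] F) : Prop :=
  ∀ v, (∀ k : ℕ, D ((L ^ k) v) = 0) → v = 0

lemma CompletelyObservable.isObservablePair {n m : ℕ} {A : Matrix (Fin n) (Fin n) ℝ}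
    {C : Matrix (Fin m) (Fin n) ℝ} (hobs : CompletelyObservable n m A C) :
    IsObservablePair (Matrix.toEuclideanLin A).toContinuousLinearMap
      (Matrix.toEuclideanLin C).toContinuousLinearMap := by
  intro v hv
  have hpow (k : ℕ) : ((Matrix.toEuclideanLin A).toContinuousLinearMap ^ k) v =
      Matrix.toEuclideanLin (A ^ k) v := by
    rw [Matrix.toLpLin_pow, ← ContinuousLinearMap.coe_coe, ContinuousLinearMap.toLinearMap_pow]
    rfl
  refine (WithLp.ofLp_eq_zero 2).1 (hobs v.ofLp fun k _ => ?_)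
  have hk := hv k
  rw [hpow] at hk
  rw [← Matrix.mulVec_mulVec]
  exact congrArg WithLp.ofLp hk

lemma output_pow_eq_zero [CompleteSpace E] {L : E →L[ℝ] E} {D : E →L[ℝ] F} {v : E} {δ : ℝ}
    (hδ : 0 < δ) (hzero : ∀ t ∈ Icc 0 δ, D (exp (t • L) v) = 0) (k : ℕ) :
    ∀ t ∈ Icc 0 δ, D ((L ^ k) (exp (t • L) v)) = 0 := by
  induction k with
  | zero => simpa using hzero
  | succ k ih =>
    intro t ht
    have hderiv : HasDerivWithinAt (fun s : ℝ => (D ∘L L ^ k) (exp (s • L) v))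
        ((D ∘L L ^ k) (L (exp (t • L) v))) (Icc 0 δ) t :=
      ((D ∘L L ^ k).hasFDerivAt.comp_hasDerivAt t
        (hasDerivAt_exp_smul_apply L v t)).hasDerivWithinAt
    have hderiv_zero : HasDerivWithinAt (fun s : ℝ => (D ∘L L ^ k) (exp (s • L) v))
        0 (Icc 0 δ) t :=
      (hasDerivWithinAt_const t (Icc 0 δ) (0 : F)).congr ih (ih t ht)
    rw [pow_succ]
    exact (uniqueDiffOn_Icc hδ t ht).eq_deriv _ hderiv hderiv_zero

lemma IsObservablePair.eq_zero_of_output_eq_zero [CompleteSpace E] {L : E →L[ℝ] E}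
    {D : E →L[ℝ] F} (hobs : IsObservablePair L D) {v : E} {δ : ℝ} (hδ : 0 < δ)
    (hzero : ∀ t ∈ Icc 0 δ, D (exp (t • L) v) = 0) : v = 0 :=
  hobs v fun k => by
    simpa using output_pow_eq_zero hδ hzero k 0 (left_mem_Icc.2 hδ.le)

lemma IsObservablePair.exists_mul_norm_le_integral_output [FiniteDimensional ℝ E]
    {L : E →L[ℝ] E} {D : E →L[ℝ] F} (hobs : IsObservablePair L D) {δ : ℝ} (hδ : 0 < δ) :
    ∃ κ > 0, ∀ v, κ * ‖v‖ ≤ ∫ t in 0..δ, ‖D (exp (t • L) v)‖ := by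
  have : CompleteSpace E := FiniteDimensional.complete ℝ E
  have : ProperSpace E := FiniteDimensional.proper ℝ E
  have houtput : Continuous fun q : E × ℝ => ‖D (exp (q.2 • L) q.1)‖ :=
    (D.continuous.comp
      (((continuous_exp_smul L).comp continuous_snd).clm_apply continuous_fst)).norm
  refine exists_pos_mul_norm_le_of_forall_pos
    (intervalIntegral.continuous_parametric_intervalIntegral_of_continuous' houtput 0 δ)
    (fun r hr v => ?_) fun v hv => ?_
  · simp only [map_smul, norm_smul, Real.norm_of_nonneg hr.le, intervalIntegral.integral_const_mul]
  · obtain ⟨t, ht, hne⟩ : ∃ t ∈ Icc 0 δ, D (exp (t • L) v) ≠ 0 := by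
      by_contra! hzero
      exact hv (hobs.eq_zero_of_output_eq_zero hδ hzero)
    exact intervalIntegral.integral_pos hδ (houtput.comp (.prodMk_right v)).continuousOn
      (fun _ _ => norm_nonneg _) ⟨t, ht, norm_pos_iff.2 hne⟩

end Observability

/-- `z` is an absolutely continuous solution on `[a, b]` of `z' = L z + f` with integrable forcing
`f`, expressed by the equivalent integral equation. -/
structure IsIntegralSolution (L : E →L[ℝ] E) (f z : ℝ → E) (a b : ℝ) : Prop where
  continuousOn : ContinuousOn z (Icc a b)
  integrableOn : IntegrableOn f (Icc a b)
  eq_add_integral : ∀ t ∈ Icc a b, z t = z a + ∫ s in a..t, (L (z s) + f s)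

namespace IsIntegralSolution

variable {L : E →L[ℝ] E} {f g z y : ℝ → E} {a b c d δ ℓ : ℝ}

lemma intervalIntegrable_forcing (hz : IsIntegralSolution L f z a b) (hc : c ∈ Icc a b)
    (hd : d ∈ Icc a b) : IntervalIntegrable f volume c d :=
  (hz.integrableOn.mono_set (uIcc_subset_Icc hc hd)).intervalIntegrable

lemma intervalIntegrable_apply (hz : IsIntegralSolution L f z a b) (D : E →L[ℝ] F)
    (hc : c ∈ Icc a b) (hd : d ∈ Icc a b) : IntervalIntegrable (fun t => D (z t)) volume c d :=
  (D.continuous.comp_continuousOn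
    (hz.continuousOn.mono (uIcc_subset_Icc hc hd))).intervalIntegrable

lemma intervalIntegrable (hz : IsIntegralSolution L f z a b) (hc : c ∈ Icc a b)
    (hd : d ∈ Icc a b) : IntervalIntegrable z volume c d :=
  hz.intervalIntegrable_apply (.id ℝ E) hc hd

lemma mono (hz : IsIntegralSolution L f z a b) (hac : a ≤ c) (hcd : c ≤ d) (hdb : d ≤ b) :
    IsIntegralSolution L f z c d where
  continuousOn := hz.continuousOn.mono (Icc_subset_Icc hac hdb)
  integrableOn := hz.integrableOn.mono_set (Icc_subset_Icc hac hdb)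
  eq_add_integral t ht := by
    have ha : a ∈ Icc a b := left_mem_Icc.2 (hac.trans (hcd.trans hdb))
    have hc : c ∈ Icc a b := ⟨hac, hcd.trans hdb⟩
    have ht' : t ∈ Icc a b := Icc_subset_Icc hac hdb ht
    rw [hz.eq_add_integral t ht', hz.eq_add_integral c hc, add_assoc,
      intervalIntegral.integral_add_adjacent_intervals
        ((hz.intervalIntegrable_apply L ha hc).add (hz.intervalIntegrable_forcing ha hc))
        ((hz.intervalIntegrable_apply L hc ht').add (hz.intervalIntegrable_forcing hc ht'))]

lemma sub (hz : IsIntegralSolution L f z a b) (hy : IsIntegralSolution L g y a b) :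
    IsIntegralSolution L (fun t => f t - g t) (fun t => z t - y t) a b where
  continuousOn := hz.continuousOn.sub hy.continuousOn
  integrableOn := hz.integrableOn.sub hy.integrableOn
  eq_add_integral t ht := by
    have ha : a ∈ Icc a b := left_mem_Icc.2 (ht.1.trans ht.2)
    have hsplit : ∀ s, L (z s - y s) + (f s - g s) = (L (z s) + f s) - (L (y s) + g s) :=
      fun s => by rw [map_sub]; abel
    simp only [hsplit]
    rw [intervalIntegral.integral_sub
        ((hz.intervalIntegrable_apply L ha ht).add (hz.intervalIntegrable_forcing ha ht))
        ((hy.intervalIntegrable_apply L ha ht).add (hy.intervalIntegrable_forcing ha ht)),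
      hz.eq_add_integral t ht, hy.eq_add_integral t ht]
    abel

lemma exp_smul_apply [CompleteSpace E] (L : E →L[ℝ] E) (v : E) (a b : ℝ) :
    IsIntegralSolution L 0 (fun t => exp ((t - a) • L) v) a b := by
  have hderiv (t : ℝ) : HasDerivAt (fun t : ℝ => exp ((t - a) • L) v)
      (L (exp ((t - a) • L) v)) t :=
    (hasDerivAt_exp_smul_apply L v (t - a)).comp_sub_const t a
  have hcont : Continuous fun t : ℝ => exp ((t - a) • L) v :=
    continuous_iff_continuousAt.2 fun t => (hderiv t).continuousAt
  refine ⟨hcont.continuousOn, integrableOn_zero, fun t _ => ?_⟩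
  simp only [Pi.zero_apply, add_zero]
  rw [intervalIntegral.integral_eq_sub_of_hasDerivAt (fun s _ => hderiv s)
    ((L.continuous.comp hcont).intervalIntegrable _ _)]
  abel

lemma norm_le (hz : IsIntegralSolution L f z a b) :
    ∀ t ∈ Icc a b, ‖z t‖ ≤ (‖z a‖ + ∫ s in a..b, ‖f s‖) * Real.exp (‖L‖ * (t - a)) := by
  refine le_mul_exp_of_le_add_mul_integral (norm_nonneg L) hz.continuousOn.norm fun t ht => ?_
  have hab : a ≤ b := ht.1.trans ht.2
  have ha : a ∈ Icc a b := left_mem_Icc.2 hab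
  have hznorm := (hz.intervalIntegrable ha ht).norm.const_mul ‖L‖
  have hfnorm := (hz.intervalIntegrable_forcing ha ht).norm
  calc ‖z t‖ ≤ ‖z a‖ + ‖∫ s in a..t, (L (z s) + f s)‖ := by
        rw [hz.eq_add_integral t ht]
        exact norm_add_le _ _
    _ ≤ ‖z a‖ + ∫ s in a..t, (‖L‖ * ‖z s‖ + ‖f s‖) := by
      gcongr
      exact intervalIntegral.norm_integral_le_of_norm_le ht.1
        (.of_forall fun s _ => (norm_add_le _ _).trans (by gcongr; exact L.le_opNorm _))
        (hznorm.add hfnorm)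
    _ = ‖z a‖ + (∫ s in a..t, ‖f s‖) + ‖L‖ * ∫ s in a..t, ‖z s‖ := by
      rw [intervalIntegral.integral_add hznorm hfnorm, intervalIntegral.integral_const_mul]
      ring
    _ ≤ ‖z a‖ + (∫ s in a..b, ‖f s‖) + ‖L‖ * ∫ s in a..t, ‖z s‖ := by
      gcongr
      exact intervalIntegral.integral_mono_interval le_rfl ht.1 ht.2
        (.of_forall fun _ => norm_nonneg _)
        (hz.intervalIntegrable_forcing ha (right_mem_Icc.2 hab)).norm

lemma norm_le_of_length_le (hz : IsIntegralSolution L f z a b) (hℓ : b - a ≤ ℓ) :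
    ∀ t ∈ Icc a b, ‖z t‖ ≤ (‖z a‖ + ∫ s in a..b, ‖f s‖) * Real.exp (‖L‖ * ℓ) := by
  intro t ht
  have : 0 ≤ ∫ s in a..b, ‖f s‖ :=
    intervalIntegral.integral_nonneg (ht.1.trans ht.2) fun _ _ => norm_nonneg _
  refine (hz.norm_le t ht).trans ?_
  gcongr
  linarith [ht.2]

lemma norm_sub_exp_smul_apply_le [CompleteSpace E] (hz : IsIntegralSolution L f z a b)
    (hℓ : b - a ≤ ℓ) : ∀ t ∈ Icc a b,
      ‖z t - exp ((t - a) • L) (z a)‖ ≤ (∫ s in a..b, ‖f s‖) * Real.exp (‖L‖ * ℓ) := by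
  simpa using (hz.sub (exp_smul_apply L (z a) a b)).norm_le_of_length_le hℓ

lemma integral_norm_le (hz : IsIntegralSolution L f z a b) (hab : a ≤ b) (hℓ : b - a ≤ ℓ) :
    ∫ t in a..b, ‖z t‖ ≤ ℓ * ((‖z a‖ + ∫ t in a..b, ‖f t‖) * Real.exp (‖L‖ * ℓ)) := by
  set B := (‖z a‖ + ∫ t in a..b, ‖f t‖) * Real.exp (‖L‖ * ℓ)
  have hB : 0 ≤ B := (norm_nonneg _).trans (hz.norm_le_of_length_le hℓ a (left_mem_Icc.2 hab))
  calc ∫ t in a..b, ‖z t‖ ≤ ∫ _ in a..b, B :=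
        intervalIntegral.integral_mono_on hab
          (hz.intervalIntegrable (left_mem_Icc.2 hab) (right_mem_Icc.2 hab)).norm
          intervalIntegrable_const (hz.norm_le_of_length_le hℓ)
    _ = (b - a) * B := by rw [intervalIntegral.integral_const, smul_eq_mul]
    _ ≤ ℓ * B := by gcongr

lemma integral_norm_output_exp_sub_smul_le [CompleteSpace E] (hz : IsIntegralSolution L f z a b)
    (D : E →L[ℝ] F) (hab : a ≤ b) (hℓ : b - a ≤ ℓ) :
    ∫ t in a..b, ‖D (exp ((t - a) • L) (z a))‖ ≤
      (∫ t in a..b, ‖D (z t)‖) +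
        ℓ * (‖D‖ * ((∫ t in a..b, ‖f t‖) * Real.exp (‖L‖ * ℓ))) := by
  have ha : a ∈ Icc a b := left_mem_Icc.2 hab
  have hb : b ∈ Icc a b := right_mem_Icc.2 hab
  have hf : 0 ≤ ∫ t in a..b, ‖f t‖ :=
    intervalIntegral.integral_nonneg hab fun _ _ => norm_nonneg _
  have hDz := (hz.intervalIntegrable_apply D ha hb).norm
  have hDy := ((exp_smul_apply L (z a) a b).intervalIntegrable_apply D ha hb).norm
  set R := ‖D‖ * ((∫ t in a..b, ‖f t‖) * Real.exp (‖L‖ * ℓ))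
  have hpointwise : ∀ t ∈ Icc a b, ‖D (exp ((t - a) • L) (z a))‖ ≤ ‖D (z t)‖ + R := by
    intro t ht
    calc ‖D (exp ((t - a) • L) (z a))‖
        ≤ ‖D (z t)‖ + ‖D (z t) - D (exp ((t - a) • L) (z a))‖ := norm_le_norm_add_norm_sub _ _
      _ ≤ ‖D (z t)‖ + R := by
        rw [← map_sub]
        gcongr
        exact D.le_opNorm_of_le (hz.norm_sub_exp_smul_apply_le hℓ t ht)
  calc ∫ t in a..b, ‖D (exp ((t - a) • L) (z a))‖ ≤ ∫ t in a..b, (‖D (z t)‖ + R) :=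
        intervalIntegral.integral_mono_on hab hDy (hDz.add intervalIntegrable_const) hpointwise
    _ = (∫ t in a..b, ‖D (z t)‖) + (b - a) * R := by
      rw [intervalIntegral.integral_add hDz intervalIntegrable_const,
        intervalIntegral.integral_const, smul_eq_mul]
    _ ≤ (∫ t in a..b, ‖D (z t)‖) + ℓ * R := by gcongr

lemma integral_norm_output_exp_smul_le [CompleteSpace E] (hz : IsIntegralSolution L f z a b)
    (D : E →L[ℝ] F) (hδ : 0 ≤ δ) (hδab : δ ≤ b - a) (hℓ : b - a ≤ ℓ) :
    ∫ t in 0..δ, ‖D (exp (t • L) (z a))‖ ≤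
      (∫ t in a..b, ‖D (z t)‖) +
        ℓ * (‖D‖ * ((∫ t in a..b, ‖f t‖) * Real.exp (‖L‖ * ℓ))) := by
  have hab : a ≤ b := by linarith
  calc ∫ t in 0..δ, ‖D (exp (t • L) (z a))‖
      = ∫ t in a..a + δ, ‖D (exp ((t - a) • L) (z a))‖ := by
        rw [intervalIntegral.integral_comp_sub_right (fun t => ‖D (exp (t • L) (z a))‖), sub_self,
          add_sub_cancel_left]
    _ ≤ ∫ t in a..b, ‖D (exp ((t - a) • L) (z a))‖ :=
      intervalIntegral.integral_mono_interval le_rfl (by linarith) (by linarith)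
        (.of_forall fun _ => norm_nonneg _)
        ((exp_smul_apply L (z a) a b).intervalIntegrable_apply D (left_mem_Icc.2 hab)
          (right_mem_Icc.2 hab)).norm
    _ ≤ _ := hz.integral_norm_output_exp_sub_smul_le D hab hℓ

end IsIntegralSolution

section Estimate

variable [FiniteDimensional ℝ E] {L : E →L[ℝ] E} {D : E →L[ℝ] F}

lemma IsObservablePair.exists_integral_norm_le_of_window (hobs : IsObservablePair L D) {δ : ℝ}
    (hδ : 0 < δ) :
    ∃ c > 0, ∀ {a b : ℝ} {z f : ℝ → E}, IsIntegralSolution L f z a b → δ ≤ b - a →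
      b - a ≤ 2 * δ →
        ∫ t in a..b, ‖z t‖ ≤ c * ((∫ t in a..b, ‖D (z t)‖) + ∫ t in a..b, ‖f t‖) := by
  have : CompleteSpace E := FiniteDimensional.complete ℝ E
  obtain ⟨κ, hκ, hlower⟩ := hobs.exists_mul_norm_le_integral_output hδ
  set ℓ := 2 * δ
  set M := Real.exp (‖L‖ * ℓ)
  refine ⟨ℓ * (((1 + ℓ * ‖D‖ * M) / κ + 1) * M), by positivity, ?_⟩
  intro a b z f hz hδab hab
  have hle : a ≤ b := by linarith
  set G := ∫ t in a..b, ‖f t‖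
  set Q := ∫ t in a..b, ‖D (z t)‖
  have hG : 0 ≤ G := intervalIntegral.integral_nonneg hle fun _ _ => norm_nonneg _
  have hQ : 0 ≤ Q := intervalIntegral.integral_nonneg hle fun _ _ => norm_nonneg _
  have hinitial : ‖z a‖ ≤ (1 + ℓ * ‖D‖ * M) / κ * (Q + G) := by
    rw [div_mul_eq_mul_div, le_div_iff₀' hκ]
    calc κ * ‖z a‖ ≤ Q + ℓ * (‖D‖ * (G * M)) :=
        (hlower (z a)).trans (hz.integral_norm_output_exp_smul_le D hδ.le hδab hab)
      _ = Q + ℓ * ‖D‖ * M * G := by ring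
      _ ≤ (Q + G) + ℓ * ‖D‖ * M * (Q + G) := by gcongr <;> linarith
      _ = (1 + ℓ * ‖D‖ * M) * (Q + G) := by ring
  calc ∫ t in a..b, ‖z t‖ ≤ ℓ * ((‖z a‖ + G) * M) := hz.integral_norm_le hle hab
    _ ≤ ℓ * (((1 + ℓ * ‖D‖ * M) / κ * (Q + G) + (Q + G)) * M) := by
      gcongr
      linarith
    _ = ℓ * (((1 + ℓ * ‖D‖ * M) / κ + 1) * M) * (Q + G) := by ring

theorem observability_estimate_integer_length_general (hobs : IsObservablePair L D) {δ : ℝ}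
    (hδ : 0 < δ) :
    ∃ c > 0, ∀ (a b : ℝ), δ ≤ b - a → ∀ z f : ℝ → E, IsIntegralSolution L f z a b →
      ∫ t in Icc a b, ‖z t‖ ≤
        c * ((∫ t in Icc a b, ‖D (z t)‖) + ∫ t in Icc a b, ‖f t‖) := by
  obtain ⟨c, hc, hwindow⟩ := hobs.exists_integral_norm_le_of_window hδ
  refine ⟨c, hc, fun a b hlen z f hz => ?_⟩
  have hab : a ≤ b := by linarith
  have hDz : IntegrableOn (fun t => ‖D (z t)‖) (Icc a b) :=
    (D.continuous.comp_continuousOn hz.continuousOn).norm.integrableOn_Icc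
  have hf : IntegrableOn (fun t => ‖f t‖) (Icc a b) := hz.integrableOn.norm
  rw [← integral_add hDz hf, ← integral_const_mul]
  simp only [integral_Icc_eq_integral_Ioc, ← intervalIntegral.integral_of_le hab]
  refine integral_le_integral_of_forall_window hδ hz.continuousOn.norm.integrableOn_Icc
    ((hDz.add hf).const_mul c) hlen fun p q hp hq hδpq hpq => ?_
  have hpq' : p ≤ q := by linarith
  have hsub : Icc p q ⊆ Icc a b := Icc_subset_Icc hp hq
  rw [intervalIntegral.integral_const_mul, intervalIntegral.integral_add]
  · exact hwindow (hz.mono hp hpq' hq) hδpq hpq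
  · exact (hDz.mono_set (uIcc_of_le hpq' ▸ hsub)).intervalIntegrable
  · exact (hf.mono_set (uIcc_of_le hpq' ▸ hsub)).intervalIntegrable

end Estimate

/-- **Observability estimate on intervals of integer length.**
If `(A, C)` is completely observable, there is `c > 0` (depending only on `A` and `C`)
such that for every interval `I = [a, a + T]` with `T` a positive integer, every
absolutely continuous `z : I → ℝⁿ` (encoded by the integral identity together with
continuity) and every integrable `f` with `ż = A z + f` a.e. on `I`, one has
`∫_I ‖z‖ ≤ c (∫_I ‖C z‖ + ∫_I ‖f‖)`. -/
theorem observability_estimate_integer_length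
    (n m : ℕ) (A : Matrix (Fin n) (Fin n) ℝ) (C : Matrix (Fin m) (Fin n) ℝ)
    (hobs : CompletelyObservable n m A C) :
    ∃ c > 0, ∀ (a : ℝ) (T : ℕ), 0 < T →
      ∀ (z f : ℝ → EuclideanSpace ℝ (Fin n)),
        ContinuousOn z (Set.Icc a (a + (T : ℝ))) →
        IntegrableOn f (Set.Icc a (a + (T : ℝ))) →
        (∀ t ∈ Set.Icc a (a + (T : ℝ)),
          z t = z a + ∫ s in a..t, (Matrix.toEuclideanLin A (z s) + f s)) →
        (∫ t in Set.Icc a (a + (T : ℝ)), ‖z t‖) ≤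
          c * ((∫ t in Set.Icc a (a + (T : ℝ)), ‖Matrix.toEuclideanLin C (z t)‖) +
               ∫ t in Set.Icc a (a + (T : ℝ)), ‖f t‖) := by
  obtain ⟨c, hc, hestimate⟩ :=
    observability_estimate_integer_length_general hobs.isObservablePair one_pos
  exact ⟨c, hc, fun a T hT z f hz hf hsol =>
    hestimate a (a + T) (by simpa using Nat.one_le_iff_ne_zero.2 hT.ne') z f ⟨hz, hf, hsol⟩⟩
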